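/- Let α, β > −1 with α > β and α + β ≥ −1, and let n ≥ 1 be an integer. Then d_{k,n} > 0 for every integer k with 0 ≤ k ≤ n. -/

import Mathlib

open Finset

/-- Pochhammer symbol `(a)_j = a (a+1) ⋯ (a+j-1)`. -/
noncomputable def poch (a : ℝ) (j : ℕ) : ℝ := ∏ i ∈ Finset.range j, (a + i)

/-- Generalized binomial coefficient `binom(a, m) = a (a-1) ⋯ (a-m+1) / m!`. -/
noncomputable def gbinom (a : ℝ) (m : ℕ) : ℝ :=
  (∏ i ∈ Finset.range m, (a - i)) / (Nat.factorial m)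

/-- Jacobi polynomial `P_n^{(α,β)}(x)` of a real variable. -/
noncomputable def jacobiP (α β : ℝ) (n : ℕ) (x : ℝ) : ℝ :=
  (1 / 2 ^ n) * ∑ k ∈ Finset.range (n + 1),
    gbinom ((n : ℝ) + α) (n - k) * gbinom ((n : ℝ) + β) k * (x - 1) ^ k * (x + 1) ^ (n - k)

/-- Jacobi polynomial `P_n^{(α,β)}(z)` of a complex variable. -/
noncomputable def jacobiC (α β : ℝ) (n : ℕ) (z : ℂ) : ℂ :=
  (1 / 2 ^ n) * ∑ k ∈ Finset.range (n + 1),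
    ((gbinom ((n : ℝ) + α) (n - k) * gbinom ((n : ℝ) + β) k : ℝ) : ℂ) *
      (z - 1) ^ k * (z + 1) ^ (n - k)

/-- Chebyshev-connection coefficients `d_{k,n}`, given by a terminating ₃F₂ sum. -/
noncomputable def dCoeff (α β : ℝ) (n k : ℕ) : ℝ :=
  (poch ((n : ℝ) + α + β + 1) k * poch ((k : ℝ) + α + 1) (n - k)) /
      ((Nat.factorial (n - k)) * 2 ^ (2 * k) * (Nat.factorial k)) *
    ∑ j ∈ Finset.range (n - k + 1),
      (poch ((k : ℝ) - n) j * poch ((n : ℝ) + k + α + β + 1) j * poch ((k : ℝ) + 1 / 2) j) /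
        (poch ((k : ℝ) + α + 1) j * poch (2 * (k : ℝ) + 1) j * (Nat.factorial j))

/-- The Bernstein ellipse `E_ρ`: the set of points `z = (u + u⁻¹)/2` with `|u| = ρ`. -/
def bernsteinEllipse (ρ : ℝ) : Set ℂ :=
  {z : ℂ | ∃ u : ℂ, ‖u‖ = ρ ∧ z = (u + u⁻¹) / 2}

theorem poch_zero' (a : ℝ) : poch a 0 = 1 := by simp [poch]

theorem poch_succ_right (a : ℝ) (j : ℕ) : poch a (j + 1) = poch a j * (a + j) := by
  simp [poch, Finset.prod_range_succ]

theorem poch_succ_left (a : ℝ) (j : ℕ) : poch a (j + 1) = a * poch (a + 1) j := by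
  unfold poch
  rw [Finset.prod_range_succ']
  rw [mul_comm]
  congr 1
  · simp
  · apply Finset.prod_congr rfl
    intro i _
    push_cast
    ring

theorem poch_pos' (a : ℝ) (ha : 0 < a) (j : ℕ) : 0 < poch a j := by
  unfold poch
  apply Finset.prod_pos
  intro i _
  positivity

theorem poch_neg_zero (n j : ℕ) (h : n < j) : poch (-(n : ℝ)) j = 0 := by
  unfold poch
  apply Finset.prod_eq_zero (Finset.mem_range.mpr h)
  simp

/-- Coefficient of the Hahn-type polynomial. -/
noncomputable def hahnT (s A κ ν : ℝ) (j : ℕ) : ℝ :=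
  poch (-ν) j * poch (ν + s + 1) j / (poch (A + 1) j * poch (2 * κ + 1) j * (Nat.factorial j))

/-- Recurrence coefficient (negated). -/
noncomputable def hahnA (s A κ ν : ℝ) : ℝ :=
  (ν + s + 1) * (ν + A + 1) * (ν + 2 * κ + 1) / ((2 * ν + s + 1) * (2 * ν + s + 2))

/-- Recurrence coefficient. -/
noncomputable def hahnC (s A κ ν : ℝ) : ℝ :=
  ν * (ν + s - 2 * κ) * (ν + s - A) / ((2 * ν + s) * (2 * ν + s + 1))

theorem hahn_coeff_zero (s A κ ν : ℝ) :
    (-hahnA s A κ ν) * hahnT s A κ (ν + 1) 0 - (-hahnA s A κ ν + hahnC s A κ ν) * hahnT s A κ ν 0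
      + hahnC s A κ ν * hahnT s A κ (ν - 1) 0 = 0 := by
  simp [hahnT, poch_zero']

theorem hahn_coeff (s A κ ν : ℝ) (hA : 0 < A + 1) (hκ : 0 ≤ κ) (h : 0 < 2 * ν + s) (j : ℕ) :
    (-hahnA s A κ ν) * hahnT s A κ (ν + 1) (j + 1)
      - (-hahnA s A κ ν + hahnC s A κ ν) * hahnT s A κ ν (j + 1)
      + hahnC s A κ ν * hahnT s A κ (ν - 1) (j + 1)
      = hahnT s A κ ν j - (j + 1) * hahnT s A κ ν (j + 1) := by
  have h1 : 2 * ν + s ≠ 0 := h.ne'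
  have h2 : 2 * ν + s + 1 ≠ 0 := by positivity
  have h3 : 2 * ν + s + 2 ≠ 0 := by positivity
  have h5 : (2 * κ + 1) ≠ 0 := by positivity
  have h6 : A + 1 ≠ 0 := hA.ne'
  cases j with
  | zero =>
    simp only [hahnT, hahnA, hahnC, poch_succ_right, poch_zero', Nat.factorial]
    push_cast
    simp only [add_zero, one_mul, zero_add, mul_one]
    obtain ⟨w, rfl⟩ : ∃ w, s = w - 2 * ν := ⟨2 * ν + s, by ring⟩
    rw [show 2 * ν + (w - 2 * ν) = w by ring] at *
    field_simp
    ring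
  | succ j =>
    have a1 : poch (-(ν + 1)) (j + 1 + 1) = (-(ν + 1)) * (-ν) * poch (-ν + 1) j := by
      rw [poch_succ_left, show -(ν + 1) + 1 = -ν by ring, poch_succ_left]; ring
    have a2 : poch (-ν) (j + 1 + 1) = (-ν) * poch (-ν + 1) j * (-ν + 1 + j) := by
      rw [poch_succ_left, poch_succ_right]; ring
    have a3 : poch (-(ν - 1)) (j + 1 + 1) = poch (-ν + 1) j * (-ν + 1 + j) * (-ν + 2 + j) := by
      rw [show -(ν - 1) = -ν + 1 by ring, poch_succ_right, poch_succ_right]; push_cast; ring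
    have a4 : poch (-ν) (j + 1) = (-ν) * poch (-ν + 1) j := poch_succ_left _ _
    have b1 : poch (ν + 1 + s + 1) (j + 2)
        = poch (ν + s + 2) j * (ν + s + 2 + j) * (ν + s + 3 + j) := by
      rw [show ν + 1 + s + 1 = ν + s + 2 by ring, poch_succ_right, poch_succ_right]
      push_cast; ring
    have b2 : poch (ν + s + 1) (j + 2)
        = (ν + s + 1) * poch (ν + s + 2) j * (ν + s + 2 + j) := by
      rw [poch_succ_left, poch_succ_right, show ν + s + 1 + 1 = ν + s + 2 by ring]; ring
    have b3 : poch (ν - 1 + s + 1) (j + 1 + 1) = (ν + s) * (ν + s + 1) * poch (ν + s + 2) j := by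
      rw [poch_succ_left, poch_succ_left, show ν - 1 + s + 1 + 1 + 1 = ν + s + 2 by ring]; ring
    have b4 : poch (ν + s + 1) (j + 1) = (ν + s + 1) * poch (ν + s + 2) j := by
      rw [poch_succ_left, show ν + s + 1 + 1 = ν + s + 2 by ring]
    have c1 : poch (A + 1) (j + 1 + 1) = poch (A + 1) (j + 1) * (A + 2 + j) := by
      rw [poch_succ_right]; push_cast; ring
    have c2 : poch (2 * κ + 1) (j + 1 + 1) = poch (2 * κ + 1) (j + 1) * (2 * κ + 2 + j) := by
      rw [poch_succ_right]; push_cast; ring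
    have c3 : ((Nat.factorial (j + 1 + 1) : ℕ) : ℝ) = ((j : ℝ) + 2) * (Nat.factorial (j + 1) : ℕ) := by
      rw [Nat.factorial_succ (j + 1)]; push_cast; ring
    have d1 := (poch_pos' (A + 1) hA (j + 1)).ne'
    have d2 := (poch_pos' (2 * κ + 1) (by positivity) (j + 1)).ne'
    have d3 : ((Nat.factorial (j + 1) : ℕ) : ℝ) ≠ 0 := by positivity
    have e1 : A + 2 + (j : ℝ) ≠ 0 := by
      have : (0 : ℝ) ≤ j := Nat.cast_nonneg j
      linarith
    have e2 : 2 * κ + 2 + (j : ℝ) ≠ 0 := by positivity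
    have e3 : (j : ℝ) + 2 ≠ 0 := by positivity
    simp only [hahnT, hahnA, hahnC]
    rw [a1, a2, a3, a4, b1, b2, b3, b4, c1, c2, c3]
    generalize poch (-ν + 1) j = G
    generalize poch (ν + s + 2) j = H
    generalize poch (A + 1) (j + 1) = P at *
    generalize poch (2 * κ + 1) (j + 1) = R at *
    generalize ((Nat.factorial (j + 1) : ℕ) : ℝ) = F at *
    push_cast
    generalize (j : ℝ) = x at *
    clear a1 a2 a3 a4 b1 b2 b3 b4 c1 c2 c3 hκ h5
    obtain ⟨u, rfl⟩ : ∃ u, κ = (u - 2 - x) / 2 := ⟨2 * κ + 2 + x, by ring⟩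
    rw [show 2 * ((u - 2 - x) / 2) + 2 + x = u by ring] at *
    obtain ⟨a, rfl⟩ : ∃ a, A = a - 2 - x := ⟨A + 2 + x, by ring⟩
    rw [show a - 2 - x + 2 + x = a by ring] at *
    obtain ⟨v, rfl⟩ : ∃ v, x = v - 2 := ⟨x + 2, by ring⟩
    rw [show v - 2 + 2 = v by ring] at *
    clear hA h6
    obtain ⟨w, rfl⟩ : ∃ w, s = w - 2 * ν := ⟨2 * ν + s, by ring⟩
    rw [show 2 * ν + (w - 2 * ν) = w by ring] at *
    field_simp
    ring

theorem hahn_tel (s A κ ν y : ℝ) (hA : 0 < A + 1) (hκ : 0 ≤ κ) (h : 0 < 2 * ν + s) (L : ℕ) :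
    ∑ j ∈ range (L + 1), ((-hahnA s A κ ν) * hahnT s A κ (ν + 1) j
      - (-hahnA s A κ ν + hahnC s A κ ν) * hahnT s A κ ν j
      + hahnC s A κ ν * hahnT s A κ (ν - 1) j - y * hahnT s A κ ν j) * poch y j
      = - hahnT s A κ ν L * poch y (L + 1) := by
  induction L with
  | zero =>
    rw [Finset.sum_range_one, hahn_coeff_zero, poch_succ_right, poch_zero']
    simp
    ring
  | succ L ih =>
    rw [Finset.sum_range_succ, ih, hahn_coeff s A κ ν hA hκ h L, poch_succ_right y (L + 1)]
    push_cast
    ring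

/-- The Hahn-type polynomial, as a terminating sum. -/
noncomputable def hahnQ (s A κ y : ℝ) (N : ℕ) : ℝ :=
  ∑ j ∈ range (N + 1), hahnT s A κ N j * poch y j

theorem hahnT_zero (s A κ : ℝ) (n j : ℕ) (h : n < j) : hahnT s A κ n j = 0 := by
  simp [hahnT, poch_neg_zero n j h]

theorem hahnQ_ext (s A κ y : ℝ) (N L : ℕ) (h : N ≤ L) :
    ∑ j ∈ range (L + 1), hahnT s A κ N j * poch y j = hahnQ s A κ y N := by
  unfold hahnQ
  symm
  apply Finset.sum_subset
  · intro i; simp only [Finset.mem_range]; omega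
  · intro i _ hi
    rw [hahnT_zero s A κ N i (by simp only [Finset.mem_range] at hi; omega)]
    simp

theorem hahn_rec (s A κ y : ℝ) (hA : 0 < A + 1) (hκ : 0 ≤ κ) (m : ℕ)
    (h : 0 < 2 * ((m : ℝ) + 1) + s) :
    hahnA s A κ (m + 1) * hahnQ s A κ y (m + 2)
      = (hahnA s A κ (m + 1) - hahnC s A κ (m + 1) - y) * hahnQ s A κ y (m + 1)
        + hahnC s A κ (m + 1) * hahnQ s A κ y m := by
  have t := hahn_tel s A κ (m + 1) y hA hκ h (m + 2)
  have z : hahnT s A κ ((m : ℝ) + 1) (m + 2) = 0 := by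
    have := hahnT_zero s A κ (m + 1) (m + 2) (by omega)
    push_cast at this
    exact this
  rw [z] at t
  rw [← hahnQ_ext s A κ y (m + 2) (m + 2) le_rfl, ← hahnQ_ext s A κ y (m + 1) (m + 2) (by omega),
    ← hahnQ_ext s A κ y m (m + 2) (by omega)]
  have e1 : (((m + 2 : ℕ)) : ℝ) = (m : ℝ) + 1 + 1 := by push_cast; ring
  have e2 : (((m + 1 : ℕ)) : ℝ) = (m : ℝ) + 1 := by push_cast; ring
  rw [e1, e2]
  rw [show (m : ℝ) + 1 - 1 = m by ring] at t
  rw [Finset.mul_sum, Finset.mul_sum, Finset.mul_sum, ← Finset.sum_add_distrib, ← sub_eq_zero,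
    ← Finset.sum_sub_distrib]
  have t' : -∑ j ∈ range (m + 2 + 1), ((-hahnA s A κ (m + 1)) * hahnT s A κ ((m : ℝ) + 1 + 1) j
      - (-hahnA s A κ (m + 1) + hahnC s A κ (m + 1)) * hahnT s A κ ((m : ℝ) + 1) j
      + hahnC s A κ (m + 1) * hahnT s A κ m j - y * hahnT s A κ ((m : ℝ) + 1) j) * poch y j = 0 := by
    rw [t]; simp
  rw [← t', ← Finset.sum_neg_distrib]
  apply Finset.sum_congr rfl
  intro j _
  ring

theorem hahnQ_pos (s A κ : ℝ) (hA : 0 < A + 1) (hB : 0 < s - A + 1) (hκ : 0 ≤ κ)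
    (hs : 2 * κ - 1 ≤ s) (hd : s < 2 * A) (N : ℕ) :
    0 < hahnQ s A κ (κ + 1 / 2) N := by
  induction N using Nat.strong_induction_on with
  | _ N ih =>
  match N, ih with
  | 0, _ => simp [hahnQ, hahnT, poch_zero']
  | 1, _ =>
    have h5 : (2 * κ + 1) ≠ 0 := by positivity
    have : hahnQ s A κ (κ + 1 / 2) 1 = (A - s / 2) / (A + 1) := by
      have h6 := hA.ne'
      simp only [hahnQ, hahnT, Finset.sum_range_succ, Finset.sum_range_zero, poch_succ_right,
        poch_zero', Nat.factorial]
      push_cast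
      simp only [add_zero, one_mul, zero_add, mul_one]
      field_simp
      ring
    rw [this]
    apply div_pos <;> linarith
  | m + 2, ih =>
    have q1 := ih (m + 1) (by omega)
    have q0 := ih m (by omega)
    have hm : (0 : ℝ) ≤ m := Nat.cast_nonneg m
    have r := hahn_rec s A κ (κ + 1 / 2) hA hκ m (by linarith)
    have u0 : 0 < 2 * ((m : ℝ) + 1) + s := by linarith
    have hAp : 0 < hahnA s A κ (m + 1) := by
      unfold hahnA
      apply div_pos
      · apply mul_pos (mul_pos _ _) _ <;> linarith
      · apply mul_pos <;> linarith
    have hCp : 0 ≤ hahnC s A κ (m + 1) := by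
      unfold hahnC
      apply div_nonneg
      · apply mul_nonneg (mul_nonneg _ _) _ <;> linarith
      · apply mul_nonneg <;> linarith
    have hp : 0 < hahnA s A κ (m + 1) - hahnC s A κ (m + 1) - (κ + 1 / 2) := by
      have e : hahnA s A κ (m + 1) - hahnC s A κ (m + 1) - (κ + 1 / 2)
          = (A - s / 2) * (((m : ℝ) + 1 + s + 1) * (m + 1 + 2 * κ + 1)
              / ((2 * (m + 1) + s + 1) * (2 * (m + 1) + s + 2))
            + ((m : ℝ) + 1) * (m + 1 + s - 2 * κ)
              / ((2 * (m + 1) + s) * (2 * (m + 1) + s + 1))) := by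
        have h1 := u0.ne'
        have h2 : 2 * ((m : ℝ) + 1) + s + 1 ≠ 0 := by positivity
        have h3 : 2 * ((m : ℝ) + 1) + s + 2 ≠ 0 := by positivity
        unfold hahnA hahnC
        clear * - h1 h2 h3
        generalize (m : ℝ) + 1 = ν at *
        obtain ⟨w, rfl⟩ : ∃ w, s = w - 2 * ν := ⟨2 * ν + s, by ring⟩
        rw [show 2 * ν + (w - 2 * ν) = w by ring] at *
        field_simp
        ring
      rw [e]
      apply mul_pos (by linarith)
      apply add_pos_of_pos_of_nonneg
      · apply div_pos
        · apply mul_pos <;> linarith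
        · apply mul_pos <;> linarith
      · apply div_nonneg
        · apply mul_nonneg <;> linarith
        · apply mul_nonneg <;> linarith
    have : 0 < hahnA s A κ (m + 1) * hahnQ s A κ (κ + 1 / 2) (m + 2) := by
      rw [r]
      exact add_pos_of_pos_of_nonneg (mul_pos hp q1) (mul_nonneg hCp q0.le)
    exact pos_of_mul_pos_right this hAp.le

/-- if `α > β` and `α + β ≥ -1`, then all coefficients `d_{k,n}` are positive. -/
theorem dCoeff_pos
    (α β : ℝ) (hα : -1 < α) (hβ : -1 < β) (hab : β < α) (hsum : -1 ≤ α + β)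
    (n : ℕ) (hn : 1 ≤ n) (k : ℕ) (hk0 : 0 ≤ k) (hk : k ≤ n) :
    0 < dCoeff α β n k := by
  have hn' : (1 : ℝ) ≤ n := by exact_mod_cast hn
  have hk' : (0 : ℝ) ≤ k := Nat.cast_nonneg k
  unfold dCoeff
  apply mul_pos
  · apply div_pos
    · exact mul_pos (poch_pos' _ (by linarith) _) (poch_pos' _ (by linarith) _)
    · positivity
  · have q := hahnQ_pos (2 * k + α + β) (k + α) k (by linarith) (by linarith) hk' (by linarith)
      (by linarith) (n - k)
    unfold hahnQ hahnT at q
    rw [Nat.cast_sub hk] at q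
    refine lt_of_lt_of_eq q (Finset.sum_congr rfl ?_)
    intro j _
    rw [show -((n : ℝ) - k) = k - n by ring,
      show (n : ℝ) - k + (2 * k + α + β) + 1 = n + k + α + β + 1 by ring]
    ring
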